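/- For any partition λ and any n ≥ 1, the total degree in the x-variables of the hybrid Grothendieck polynomial G_λ(x_1,...,x_n; 1; 1) (all t_i = w_i = 1) is equal to the size |λ̄^{(n)}| = Σ_i λ̄^{(n)}_i. -/

import Mathlib

open scoped Classical

/-- A partition, given as its weakly decreasing sequence of parts (0-indexed),
with finitely many nonzero parts. -/
def IsPartitionFun (f : ℕ → ℕ) : Prop :=
  (∀ i, f (i + 1) ≤ f i) ∧ ∃ N, ∀ i, N ≤ i → f i = 0

/-- Box `(i, j)` (row `i`, column `j`, both 0-indexed) lies in the skew shape `lam/mu`. -/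
def InShape (lam mu : ℕ → ℕ) (i j : ℕ) : Prop :=
  mu i ≤ j ∧ j < lam i

/-- `A ≤ B` for finite sets of naturals: every element of `A` is at most every
element of `B` (for nonempty sets this says `max A ≤ min B`). -/
def FinsetLE (A B : Finset ℕ) : Prop :=
  ∀ a ∈ A, ∀ b ∈ B, a ≤ b

/-- A set-valued reverse plane partition of skew shape `lam/mu`: every box of the
shape is filled with a nonempty finite set of positive integers, the sets weakly
increase along rows and down columns, and boxes outside the shape are empty. -/
def IsSVRPP (lam mu : ℕ → ℕ) (T : ℕ → ℕ → Finset ℕ) : Prop :=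
  (∀ i j, ¬ InShape lam mu i j → T i j = ∅) ∧
  (∀ i j, InShape lam mu i j → (T i j).Nonempty) ∧
  (∀ i j x, x ∈ T i j → 1 ≤ x) ∧
  (∀ i j, InShape lam mu i j → InShape lam mu i (j + 1) → FinsetLE (T i j) (T i (j + 1))) ∧
  (∀ i j, InShape lam mu i j → InShape lam mu (i + 1) j → FinsetLE (T i j) (T (i + 1) j))

/-- An SVRPP all of whose entries are subsets of `{1, …, n}`. -/
def IsSVRPPn (lam mu : ℕ → ℕ) (n : ℕ) (T : ℕ → ℕ → Finset ℕ) : Prop :=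
  IsSVRPP lam mu T ∧ ∀ i j, T i j ⊆ Finset.Icc 1 n

/-- `ircont T v` = number of columns of `T` containing a set that contains `v`. -/
noncomputable def ircont (T : ℕ → ℕ → Finset ℕ) (v : ℕ) : ℕ :=
  Set.ncard {j : ℕ | ∃ i, v ∈ T i j}

/-- `ceq lam mu T i` = number of boxes `(i,j)` of the shape with `(i+1,j)` also in the
shape and `max T(i,j) = min T(i+1,j)`. -/
noncomputable def ceq (lam mu : ℕ → ℕ) (T : ℕ → ℕ → Finset ℕ) (i : ℕ) : ℕ :=
  Set.ncard {j : ℕ | InShape lam mu i j ∧ InShape lam mu (i + 1) j ∧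
    ∃ m, m ∈ T i j ∧ (∀ x ∈ T i j, x ≤ m) ∧ m ∈ T (i + 1) j ∧ ∀ x ∈ T (i + 1) j, m ≤ x}

/-- `exv lam mu T i` = excess of row `i`: the sum over the boxes of row `i` of
(cardinality of the filling minus one). -/
def exv (lam mu : ℕ → ℕ) (T : ℕ → ℕ → Finset ℕ) (i : ℕ) : ℕ :=
  ∑ j ∈ Finset.Ico (mu i) (lam i), ((T i j).card - 1)

/-- The hybrid Grothendieck polynomial of straight shape `lam` with all `t_i = w_i = 1`:
`G_lam(x_1,…,x_n; 1; 1) = Σ_{T ∈ SVRPP^n(lam)} x^{ircont(T)}`, where `x_{v+1} = X v`. -/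
noncomputable def hybridG11 (lam : ℕ → ℕ) (n : ℕ) : MvPolynomial (Fin n) ℤ :=
  ∑ᶠ T ∈ {T : ℕ → ℕ → Finset ℕ | IsSVRPPn lam (fun _ => 0) n T},
    ∏ v : Fin n, MvPolynomial.X v ^ ircont T ((v : ℕ) + 1)

/-! ### The partitions `λ^♭` and `λ̄^{(n)}` and the tableau `T_max` -/

/-- The strict partition `λ^♭` (1-indexed part `v` is `flatPart lam (v-1)`):
`λ^♭_1 = λ_1` and `λ^♭_i = max{0, min{λ^♭_{i−1} − 1, λ_i}}` for `i ≥ 2` (truncated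
subtraction realizes the `max{0, ·}`). -/
def flatPart (lam : ℕ → ℕ) : ℕ → ℕ
  | 0 => lam 0
  | i + 1 => min (flatPart lam i - 1) (lam (i + 1))

/-- `k` = number of positive parts of `λ^♭`. -/
noncomputable def kFlat (lam : ℕ → ℕ) : ℕ :=
  Set.ncard {i : ℕ | 0 < flatPart lam i}

/-- The partition `λ̄^{(n)}`, as a function of the 1-indexed part `v`:
`λ̄^{(n)}_v = λ^♭_v + v − 1` for `1 ≤ v ≤ min(n, k)`, `λ̄^{(n)}_v = k` for `k < v ≤ n`,
and `0` for `v > n`. -/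
noncomputable def barLam (lam : ℕ → ℕ) (n : ℕ) (v : ℕ) : ℕ :=
  if 1 ≤ v ∧ v ≤ n then
    (if v ≤ kFlat lam then flatPart lam (v - 1) + (v - 1) else kFlat lam)
  else 0

/-- The tableau `T_max ∈ SVRPP^n(lam)`: in 1-indexed coordinates `(i, j)`,
`T_max(i,j) = {i}` if `i ≤ n` and `j < λ^♭_i`; `T_max(i,j) = {i, …, n}` if `i ≤ n` and
`j = λ^♭_i`; and `T_max(i,j) = {n}` otherwise (internally rows `r` and columns `j` are
0-indexed, so `(i, j) = (r + 1, j + 1)`). -/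
noncomputable def Tmax (lam : ℕ → ℕ) (n : ℕ) : ℕ → ℕ → Finset ℕ :=
  fun r j =>
    if j < lam r then
      (if r + 1 ≤ n ∧ j + 1 < flatPart lam r then {r + 1}
       else if r + 1 ≤ n ∧ j + 1 = flatPart lam r then Finset.Icc (r + 1) n
       else {n})
    else ∅

theorem hg_flat_le (lam : ℕ → ℕ) (i : ℕ) : flatPart lam i ≤ lam i := by
  cases i with
  | zero => simp [flatPart]
  | succ i => simp [flatPart]

theorem hg_flat_succ (lam : ℕ → ℕ) (i : ℕ) : flatPart lam (i+1) ≤ flatPart lam i - 1 := by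
  simp [flatPart]

theorem hg_flat_lt (lam : ℕ → ℕ) (i d : ℕ) : flatPart lam (i+1+d) ≤ flatPart lam i - 1 := by
  induction d with
  | zero => exact hg_flat_succ lam i
  | succ d ih =>
    have := hg_flat_succ lam (i+1+d)
    have e : i + 1 + (d+1) = i+1+d+1 := by ring
    rw [e]; omega

theorem hg_flat_lt' (lam : ℕ → ℕ) {i j : ℕ} (h : i < j) :
    flatPart lam j ≤ flatPart lam i - 1 := by
  obtain ⟨d, rfl⟩ := Nat.exists_eq_add_of_le (Nat.succ_le_of_lt h)
  exact hg_flat_lt lam i d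

theorem hg_pos_iff (lam : ℕ → ℕ) (hlam : IsPartitionFun lam) (i : ℕ) :
    0 < flatPart lam i ↔ i < kFlat lam := by
  have hex : ∃ N, flatPart lam N = 0 := by
    obtain ⟨N, hN⟩ := hlam.2
    exact ⟨N, by have := hg_flat_le lam N; have := hN N le_rfl; omega⟩
  have key : ∀ i, 0 < flatPart lam i ↔ i < Nat.find hex := by
    intro i
    constructor
    · intro h
      by_contra hc
      have h0 := Nat.find_spec hex
      rcases (not_lt.mp hc).eq_or_lt with h1 | h1
      · rw [h1] at h0; omega
      · have := hg_flat_lt' lam h1; omega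
    · intro h
      exact Nat.pos_of_ne_zero (Nat.find_min hex h)
  have : kFlat lam = Nat.find hex := by
    unfold kFlat
    have : {i : ℕ | 0 < flatPart lam i} = ((Finset.range (Nat.find hex) : Finset ℕ) : Set ℕ) := by
      ext i; simp [key]
    rw [this, Set.ncard_coe_finset, Finset.card_range]
  rw [this]; exact key i

theorem hg_anti {lam : ℕ → ℕ} (hlam : IsPartitionFun lam) : Antitone lam :=
  antitone_nat_of_succ_le hlam.1

theorem hg_bar (lam : ℕ → ℕ) (hlam : IsPartitionFun lam) (n v : ℕ) (h : v < n) :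
    barLam lam n (v+1) = flatPart lam v + min v (kFlat lam) := by
  have := hg_pos_iff lam hlam v
  unfold barLam
  rw [if_pos (by omega)]
  split_ifs <;> (try simp only [Nat.add_sub_cancel]) <;> omega

/-- the key chain lemma -/
theorem hg_chain (lam : ℕ → ℕ) (hlam : IsPartitionFun lam) (q : ℕ) :
    ∀ (D : Finset ℕ) (r : ℕ → ℕ), D.card = q + 1 → (∀ a ∈ D, ∀ b ∈ D, a < b → r b < r a) →
      (∀ a ∈ D, a < lam (r a)) → ∀ d ∈ D, (∀ a ∈ D, d ≤ a) → d < flatPart lam q := by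
  induction q with
  | zero =>
    intro D r _ _ hl d hd _
    exact (hl d hd).trans_le (hg_anti hlam (Nat.zero_le _))
  | succ q ih =>
    intro D r hc ha hl d hd hmin
    have hcard : (D.erase d).card = q + 1 := by rw [Finset.card_erase_of_mem hd]; omega
    have hne : (D.erase d).Nonempty := by rw [← Finset.card_pos]; omega
    have hm := Finset.min'_mem _ hne
    have hm' := Finset.mem_erase.mp hm
    have h1 := ih (D.erase d) r hcard
      (fun a h b h' => ha a (Finset.mem_of_mem_erase h) b (Finset.mem_of_mem_erase h'))
      (fun a h => hl a (Finset.mem_of_mem_erase h)) _ hm (fun a h => Finset.min'_le _ _ h)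
    have h2 := hmin _ hm'.2
    have h3 : q + 1 ≤ r d := by
      rw [← hcard, ← Finset.card_range (r d)]
      apply Finset.card_le_card_of_injOn r
      · intro a h
        have h := Finset.mem_erase.mp h
        have := hmin a h.2
        have := ha d hd a h.2 (by omega)
        simpa using this
      · intro a h b h' hab
        have h := Finset.mem_erase.mp h
        have h' := Finset.mem_erase.mp h'
        rcases lt_trichotomy a b with hh | hh | hh
        · have := ha a h.2 b h'.2 hh; omega
        · exact hh
        · have := ha b h'.2 a h.2 hh; omega
    have h4 := hl d hd
    have h5 := hg_anti hlam h3
    have h6 := hm'.1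
    simp only [flatPart]
    omega

theorem hg_row {lam : ℕ → ℕ} {T : ℕ → ℕ → Finset ℕ}
    (hT : IsSVRPP lam (fun _ => 0) T) (i j d : ℕ) (h : j + d < lam i) (x y : ℕ)
    (hx : x ∈ T i j) (hy : y ∈ T i (j + d)) (hd : 0 < d) : x ≤ y := by
  obtain ⟨h0, h1, h2, h3, h4⟩ := hT
  induction d generalizing y with
  | zero => omega
  | succ d ih =>
    rcases Nat.eq_zero_or_pos d with rfl | hd
    · exact h3 i j ⟨Nat.zero_le _, by omega⟩ ⟨Nat.zero_le _, by omega⟩ x hx y hy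
    · obtain ⟨z, hz⟩ := h1 i (j+d) ⟨Nat.zero_le _, by omega⟩
      exact (ih (by omega) z hz hd).trans
        (h3 i (j+d) ⟨Nat.zero_le _, by omega⟩ ⟨Nat.zero_le _, by omega⟩ z hz y hy)

theorem hg_col {lam : ℕ → ℕ} (hlam : IsPartitionFun lam) {T : ℕ → ℕ → Finset ℕ}
    (hT : IsSVRPP lam (fun _ => 0) T) (i j d : ℕ) (h : j < lam (i + d)) (x y : ℕ)
    (hx : x ∈ T i j) (hy : y ∈ T (i + d) j) (hd : 0 < d) : x ≤ y := by
  obtain ⟨h0, h1, h2, h3, h4⟩ := hT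
  induction d generalizing y with
  | zero => omega
  | succ d ih =>
    have e1 := hg_anti hlam (show i ≤ i + (d+1) by omega)
    have e2 := hg_anti hlam (show i + d ≤ i + (d+1) by omega)
    rcases Nat.eq_zero_or_pos d with rfl | hd
    · exact h4 i j ⟨Nat.zero_le _, by omega⟩ ⟨Nat.zero_le _, by omega⟩ x hx y hy
    · obtain ⟨z, hz⟩ := h1 (i+d) j ⟨Nat.zero_le _, by omega⟩
      exact (ih (by omega) z hz hd).trans
        (h4 (i+d) j ⟨Nat.zero_le _, by omega⟩ ⟨Nat.zero_le _, h⟩ z hz y hy)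

theorem hg_shape {lam : ℕ → ℕ} {T : ℕ → ℕ → Finset ℕ}
    (hT : IsSVRPP lam (fun _ => 0) T) {i j x : ℕ} (hx : x ∈ T i j) : j < lam i := by
  by_contra h
  rw [hT.1 i j (fun h' => h h'.2)] at hx
  simp at hx

theorem hg_le {lam : ℕ → ℕ} (hlam : IsPartitionFun lam) {T : ℕ → ℕ → Finset ℕ}
    (hT : IsSVRPP lam (fun _ => 0) T) {i j i' j' x y : ℕ} (hi : i ≤ i') (hj : j < j')
    (hx : x ∈ T i j) (hy : y ∈ T i' j') : x ≤ y := by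
  have s := hg_shape hT hy
  have s' := hg_anti hlam hi
  obtain ⟨d, rfl⟩ := Nat.exists_eq_add_of_le hj.le
  obtain ⟨z, hz⟩ := hT.2.1 i (j+d) ⟨Nat.zero_le _, by omega⟩
  have h1 := hg_row hT i j d (by omega) x z hx hz (by omega)
  rcases hi.eq_or_lt with rfl | hi
  · exact hg_row hT i j d (by omega) x y hx hy (by omega)
  · obtain ⟨e, rfl⟩ := Nat.exists_eq_add_of_le hi.le
    exact h1.trans (hg_col hlam hT i (j+d) e s z y hz hy (by omega))

theorem hg_sum (lam : ℕ → ℕ) (hlam : IsPartitionFun lam) (n : ℕ) :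
    ∑ v ∈ Finset.range n, (flatPart lam v + min v (kFlat lam)) =
    ∑ m ∈ Finset.range n,
      (Finset.Ico (m+1) (if 0 < flatPart lam m then flatPart lam m + n else 0)).card := by
  have h1 : ∀ v ∈ Finset.range n, min v (kFlat lam) =
      ∑ m ∈ Finset.range n, if m < v ∧ m < kFlat lam then 1 else 0 := by
    intro v hv
    rw [← Finset.card_filter]
    have : (Finset.range n).filter (fun m => m < v ∧ m < kFlat lam) =
        Finset.range (min v (kFlat lam)) := by
      ext m; simp at hv ⊢; omega
    rw [this, Finset.card_range]
  rw [Finset.sum_add_distrib, Finset.sum_congr rfl h1, Finset.sum_comm, ← Finset.sum_add_distrib]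
  refine Finset.sum_congr rfl fun m hm => ?_
  have hp := hg_pos_iff lam hlam m
  rw [← Finset.card_filter, Nat.card_Ico]
  simp only [Finset.mem_range] at hm
  by_cases h : 0 < flatPart lam m
  · rw [if_pos h]
    have : (Finset.range n).filter (fun v => m < v ∧ m < kFlat lam) = Finset.Ico (m+1) n := by
      ext v; simp; omega
    rw [this, Nat.card_Ico]; omega
  · rw [if_neg h]
    have : (Finset.range n).filter (fun v => m < v ∧ m < kFlat lam) = ∅ := by
      ext v; simp; omega
    rw [this]; simp; omega

theorem hg_upper (lam : ℕ → ℕ) (hlam : IsPartitionFun lam) (n : ℕ) (T : ℕ → ℕ → Finset ℕ)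
    (hT : IsSVRPPn lam (fun _ => 0) n T) :
    ∑ v ∈ Finset.range n, ircont T (v+1) ≤
    ∑ v ∈ Finset.range n, (flatPart lam v + min v (kFlat lam)) := by
  obtain ⟨hT, hTn⟩ := hT
  have hcol : ∀ v j i, v ∈ T i j → j < lam 0 := fun v j i h =>
    (hg_shape hT h).trans_le (hg_anti hlam (Nat.zero_le _))
  have hir : ∀ v, ircont T v = ((Finset.range (lam 0)).filter (fun j => ∃ i, v ∈ T i j)).card := by
    intro v
    unfold ircont
    rw [← Set.ncard_coe_finset]
    congr 1
    ext j
    simp only [Set.mem_ofPred_eq, Finset.coe_filter, Finset.mem_range]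
    exact ⟨fun ⟨i, h⟩ => ⟨hcol v j i h, i, h⟩, fun h => h.2⟩
  simp only [hir]
  rw [hg_sum lam hlam n, ← Finset.card_sigma, ← Finset.card_sigma]
  -- D c j : columns on the antidiagonal strictly to the right
  let D : ℕ → ℕ → Finset ℕ := fun c j =>
    (Finset.Ioc j c).filter (fun j' => ∃ i, c - j' ∈ T i j')
  have hD : ∀ c j, ∀ i, j ≤ c → c - j ∈ T i j →
      (D c j).card < c - j ∧ j < flatPart lam (D c j).card := by
    intro c j i hjc hi
    have hpos := hT.2.2.1 i j _ hi
    have h0 : ∀ j' ∈ D c j, j < j' ∧ j' < c ∧ ∃ i, c - j' ∈ T i j' := by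
      intro j' h
      simp only [D, Finset.mem_filter, Finset.mem_Ioc] at h
      obtain ⟨⟨h1, h2⟩, i', h3⟩ := h
      have := hT.2.2.1 i' j' _ h3
      exact ⟨h1, by omega, i', h3⟩
    refine ⟨?_, ?_⟩
    · have : (D c j).card ≤ (Finset.Ioo j c).card := by
        apply Finset.card_le_card
        intro j' h
        have := h0 j' h
        simp; omega
      rw [Nat.card_Ioo] at this
      omega
    · have hnm : j ∉ D c j := fun h => by have := h0 j h; omega
      have hex : ∀ a ∈ insert j (D c j), ∃ i, c - a ∈ T i a := by
        intro a ha
        rcases Finset.mem_insert.mp ha with rfl | ha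
        · exact ⟨i, hi⟩
        · exact (h0 a ha).2.2
      have hlt : ∀ a ∈ insert j (D c j), j ≤ a ∧ a < c := by
        intro a ha
        rcases Finset.mem_insert.mp ha with rfl | ha
        · omega
        · have := h0 a ha; omega
      let r : ℕ → ℕ := fun a => if h : ∃ i, c - a ∈ T i a then h.choose else 0
      have hr : ∀ a ∈ insert j (D c j), c - a ∈ T (r a) a := by
        intro a ha
        have := hex a ha
        simp only [r, dif_pos this]
        exact this.choose_spec
      refine hg_chain lam hlam (D c j).card (insert j (D c j)) r
        (Finset.card_insert_of_notMem hnm) ?_ ?_ j (Finset.mem_insert_self _ _)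
        (fun a ha => (hlt a ha).1)
      · intro a ha b hb hab
        by_contra hc
        have := hg_le hlam hT (not_lt.mp hc) hab (hr a ha) (hr b hb)
        have := hlt a ha
        have := hlt b hb
        omega
      · intro a ha
        exact hg_shape hT (hr a ha)
  have hmem : ∀ p : (Σ _ : ℕ, ℕ), p ∈ (Finset.range n).sigma
      (fun v => (Finset.range (lam 0)).filter (fun j => ∃ i, v + 1 ∈ T i j)) →
      p.1 < n ∧ ∃ i, p.1 + 1 ∈ T i p.2 := by
    intro p hp
    simp only [Finset.mem_sigma, Finset.mem_range, Finset.mem_filter] at hp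
    exact ⟨hp.1, hp.2.2⟩
  apply Finset.card_le_card_of_injOn
    (fun p => (⟨(D (p.2 + (p.1 + 1)) p.2).card, p.2 + (p.1 + 1)⟩ : Σ _ : ℕ, ℕ))
  · rintro ⟨v, j⟩ hp
    obtain ⟨h1, i, h2⟩ := hmem _ hp
    simp only at h1 h2
    have := hD (j + (v+1)) j i (by omega) (by simpa using h2)
    simp only [Finset.coe_sigma, Set.mem_sigma_iff, Finset.coe_range, Set.mem_Iio,
      Finset.coe_Ico, Set.mem_Ico]
    rw [if_pos (by omega)]
    omega
  · rintro ⟨v, j⟩ hp ⟨v', j'⟩ hp' heq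
    obtain ⟨h1, i, h2⟩ := hmem _ hp
    obtain ⟨h1', i', h2'⟩ := hmem _ hp'
    simp only [Sigma.mk.injEq, heq_eq_eq] at heq h1 h2 h1' h2'
    obtain ⟨e1, e2⟩ := heq
    have mono : ∀ c a b, a < b → b ≤ c → (∃ i, c - b ∈ T i b) → (D c b).card < (D c a).card := by
      intro c a b hab hbc hb
      apply Finset.card_lt_card
      rw [Finset.ssubset_iff_of_subset]
      · exact ⟨b, by simp only [D, Finset.mem_filter, Finset.mem_Ioc]; exact ⟨⟨hab, hbc⟩, hb⟩,
          by simp [D]⟩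
      · intro x
        simp only [D, Finset.mem_filter, Finset.mem_Ioc]
        rintro ⟨h, h'⟩
        exact ⟨by omega, h'⟩
    have : j = j' := by
      rcases lt_trichotomy j j' with h | h | h
      · have := mono (j + (v+1)) j j' h (by omega)
          ⟨i', by rw [e2]; simpa using h2'⟩
        rw [← e2] at e1; omega
      · exact h
      · have := mono (j + (v+1)) j' j h (by omega) ⟨i, by simpa using h2⟩
        rw [← e2] at e1; omega
    subst this
    have : v = v' := by omega
    subst this
    rfl

theorem hg_Tmax (lam : ℕ → ℕ) (n : ℕ) (hn : 1 ≤ n) :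
    IsSVRPPn lam (fun _ => 0) n (Tmax lam n) := by
  have hsub : ∀ i j, Tmax lam n i j ⊆ Finset.Icc 1 n := by
    intro i j x
    unfold Tmax
    split_ifs <;> simp <;> omega
  refine ⟨⟨?_, ?_, ?_, ?_, ?_⟩, hsub⟩
  · intro i j h
    unfold Tmax
    rw [if_neg]
    exact fun h' => h ⟨Nat.zero_le _, h'⟩
  · intro i j h
    unfold Tmax
    rw [if_pos h.2]
    split_ifs with h1 h2
    · simp
    · simp; omega
    · simp
  · intro i j x hx
    exact (Finset.mem_Icc.mp (hsub i j hx)).1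
  · intro i j _ _ a ha b hb
    have ha' := Finset.mem_Icc.mp (hsub _ _ ha)
    unfold Tmax at ha hb
    split_ifs at ha hb <;> simp at ha hb <;> omega
  · intro i j _ _ a ha b hb
    have ha' := Finset.mem_Icc.mp (hsub _ _ ha)
    have := hg_flat_succ lam i
    unfold Tmax at ha hb
    split_ifs at ha hb <;> simp at ha hb <;> omega

theorem hg_lower (lam : ℕ → ℕ) (hlam : IsPartitionFun lam) (n v : ℕ) (hv : v < n) :
    flatPart lam v + min v (kFlat lam) ≤ ircont (Tmax lam n) (v+1) := by
  have hpos := hg_pos_iff lam hlam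
  have hsh := (hg_Tmax lam n (by omega)).1
  have hfin : {j : ℕ | ∃ i, v + 1 ∈ Tmax lam n i j}.Finite := by
    apply (Set.finite_Iio (lam 0)).subset
    rintro j ⟨i, h⟩
    exact (hg_shape hsh h).trans_le (hg_anti hlam (Nat.zero_le _))
  have hinj : Set.InjOn (fun i => flatPart lam i - 1) (Finset.range (min v (kFlat lam))) := by
    intro a ha b hb hab
    simp at ha hb hab
    have := (hpos a).2 ha.2
    have := (hpos b).2 hb.2
    rcases lt_trichotomy a b with h | h | h
    · have := hg_flat_lt' lam h; omega
    · exact h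
    · have := hg_flat_lt' lam h; omega
  have hdis : Disjoint (Finset.range (flatPart lam v))
      ((Finset.range (min v (kFlat lam))).image (fun i => flatPart lam i - 1)) := by
    rw [Finset.disjoint_left]
    intro x hx hx'
    simp only [Finset.mem_range, Finset.mem_image] at hx hx'
    obtain ⟨i, hi, rfl⟩ := hx'
    have := hg_flat_lt' lam (show i < v by omega)
    omega
  have hcard : (Finset.range (flatPart lam v) ∪
      (Finset.range (min v (kFlat lam))).image (fun i => flatPart lam i - 1)).card
      = flatPart lam v + min v (kFlat lam) := by
    rw [Finset.card_union_of_disjoint hdis, Finset.card_image_of_injOn hinj]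
    simp
  rw [← hcard, ← Set.ncard_coe_finset]
  apply Set.ncard_le_ncard _ hfin
  intro j hj
  simp only [Finset.coe_union, Finset.coe_range, Finset.coe_image, Set.mem_union, Set.mem_Iio,
    Set.mem_image] at hj
  rcases hj with hj | ⟨i, hi, rfl⟩
  · refine ⟨v, ?_⟩
    have := hg_flat_le lam v
    unfold Tmax
    rw [if_pos (by omega)]
    split_ifs <;> simp <;> omega
  · refine ⟨i, ?_⟩
    have := hg_flat_le lam i
    have := (hpos i).2 (by omega)
    unfold Tmax
    rw [if_pos (by omega), if_neg (by omega), if_pos (by omega)]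
    simp; omega

theorem hg_finite (lam : ℕ → ℕ) (hlam : IsPartitionFun lam) (n : ℕ) :
    {T : ℕ → ℕ → Finset ℕ | IsSVRPPn lam (fun _ => 0) n T}.Finite := by
  obtain ⟨N, hN⟩ := hlam.2
  let g : {T : ℕ → ℕ → Finset ℕ | IsSVRPPn lam (fun _ => 0) n T} →
      (Fin N → Fin (lam 0) → (Finset.Icc 1 n).powerset) :=
    fun T i j => ⟨T.1 i j, Finset.mem_powerset.mpr (T.2.2 i j)⟩
  have hg : Function.Injective g := by
    rintro ⟨T, hT⟩ ⟨T', hT'⟩ h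
    apply Subtype.ext
    funext i j
    by_cases hij : j < lam i
    · have h1 : i < N := by
        by_contra hc
        have := hN i (by omega)
        omega
      have h2 := hij.trans_le (hg_anti hlam (Nat.zero_le i))
      have := congrFun (congrFun h ⟨i, h1⟩) ⟨j, h2⟩
      exact congrArg Subtype.val this
    · have e1 := hT.1.1 i j (fun h => hij h.2)
      have e2 := hT'.1.1 i j (fun h => hij h.2)
      simp [e1, e2]
  exact Set.finite_coe_iff.mp (Finite.of_injective g hg)

/-- For any partition `lam` and any `n ≥ 1`, the total degree in the
`x`-variables of `G_lam(x_1,…,x_n; 1; 1)` equals `|λ̄^{(n)}| = Σ_v λ̄^{(n)}_v`. -/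
theorem hybridG11_totalDegree (lam : ℕ → ℕ) (hlam : IsPartitionFun lam)
    (n : ℕ) (hn : 1 ≤ n) :
    (hybridG11 lam n).totalDegree = ∑ v ∈ Finset.Icc 1 n, barLam lam n v := by
  have hrhs : ∑ v ∈ Finset.Icc 1 n, barLam lam n v =
      ∑ v ∈ Finset.range n, (flatPart lam v + min v (kFlat lam)) := by
    have : Finset.Icc 1 n = Finset.Ico 1 (n+1) := by ext; simp only [Finset.mem_Icc, Finset.mem_Ico]; omega
    rw [this, Finset.sum_Ico_eq_sum_range]
    refine Finset.sum_congr rfl fun v hv => ?_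
    rw [Nat.add_comm 1 v, hg_bar lam hlam n v (by simpa using hv)]
  have hf := hg_finite lam hlam n
  let e : (ℕ → ℕ → Finset ℕ) → (Fin n →₀ ℕ) := fun T =>
    Finsupp.equivFunOnFinite.symm (fun v => ircont T ((v : ℕ) + 1))
  have hdeg : ∀ T, (e T).sum (fun _ k => k) = ∑ v ∈ Finset.range n, ircont T (v+1) := by
    intro T
    rw [Finsupp.sum_fintype _ _ (fun _ => rfl), Finset.sum_range]
    rfl
  have hmon : ∀ T, (∏ v : Fin n, MvPolynomial.X v ^ ircont T ((v : ℕ) + 1) :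
      MvPolynomial (Fin n) ℤ) = MvPolynomial.monomial (e T) 1 := by
    intro T
    rw [MvPolynomial.monomial_eq, Finsupp.prod_fintype _ _ (fun _ => pow_zero _)]
    simp [e]
  have hG : hybridG11 lam n = ∑ T ∈ hf.toFinset, MvPolynomial.monomial (e T) (1:ℤ) := by
    unfold hybridG11
    rw [finsum_mem_eq_finite_toFinset_sum _ hf]
    exact Finset.sum_congr rfl fun T _ => hmon T
  rw [hrhs]
  apply le_antisymm
  · rw [hG]
    apply MvPolynomial.totalDegree_finsetSum_le
    intro T hT
    rw [MvPolynomial.totalDegree_monomial _ one_ne_zero, hdeg]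
    exact hg_upper lam hlam n T (by simpa using hT)
  · have hmax := hg_Tmax lam n hn
    refine le_trans (Finset.sum_le_sum fun v hv =>
      hg_lower lam hlam n v (by simpa using hv)) ?_
    rw [← hdeg]
    apply MvPolynomial.le_totalDegree
    rw [MvPolynomial.mem_support_iff, hG, MvPolynomial.coeff_sum]
    simp only [MvPolynomial.coeff_monomial]
    apply ne_of_gt
    apply Finset.sum_pos'
    · intro T _
      split_ifs <;> simp
    · exact ⟨Tmax lam n, by simpa using hmax, by simp⟩
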